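/- arXiv:1912.03898 — 2 statements merged into one kernel-verified Lean document; each statement's English description precedes it below -/
import Mathlib

section
/- Let X_1,…,X_m be rank-preserving isotone maps from Δ_m(n) to B(n) with associated monomials m(b), and suppose that for every c ∈ Δ_m(n+1) the linear syzygy edges of the down-graph D(c) contain a spanning tree of D(c). Then for any a, b ∈ Δ_m(n) there is a path a = b_0, b_1, …, b_N = b in Δ_m(n) such that: (1) every b_i satisfies b_i ≤ a ∨ b componentwise, where (a ∨ b)_j = max(a_j, b_j); (2) every m(b_i) divides lcm(m(a), m(b)); and (3) for each i, the step from b_{i−1} to b_i is along a linear syzygy edge. -/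
/-!
The tuple `u` is called admissible for a bound `M` and sets `S p` if `u ∈ Δ_m(n)`, `u ≤ M` and
`X_p(u) ⊆ S p` for all `p`. Any two admissible `a`, `b` are joined by a path of linear syzygy
edges through admissible tuples; the theorem is the case `M = a ∨ b`, `S p = X_p(a) ∪ X_p(b)`.

The proof is by strong induction on the distance `d(a, b) = ∑ max(b_t - a_t, 0)`. If `a ≠ b`,
pick `j` with `a_j < b_j`, put `c = a + e_j`, and take a walk of linear syzygy edges of `D(c)`
from `j` to some `i` with `b_i < a_i`; by an inner induction on its length, no vertex `p ≠ i` of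
the walk has `b_p < a_p`. Put `u = c - e_i`. Then `X_p(u) ⊆ X_p(a)` except possibly at the
vertices `p ≠ i` of the walk, and `d(u, b) < d(a, b)`, so there is a path from `u` to `b` inside
`lcm(m(u), m(b))`. Follow it backwards from `b`. As long as no coordinate `p ≠ i` on the walk
drops below `b_p`, the sets `X_p` for those `p` stay equal to `X_p(b)`.

* If no such coordinate ever drops, `u` is itself admissible, and `a`, `u` are joined within
  `D(c)` along a simple path (`reach_of_downGraph`).
* Otherwise let `b'` be the tuple at the first drop, at coordinate `p`; it is still admissible
  (`drop_or_const`). Either `d(a, b') < d(a, b)`, or `b'_p < a_p` and the walk can be shortened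
  to end in `p`. Either way `a` is joined to `b'` by induction.
-/

open MvPolynomial

noncomputable section

/-- A list of elements is a regular sequence on `A ⧸ J`. -/
def IsRegSeq {A : Type*} [CommRing A] : List A → Ideal A → Prop
  | [], _ => True
  | a :: l, J => (∀ f, a * f ∈ J → f ∈ J) ∧ IsRegSeq l (J ⊔ Ideal.span {a})

/-- The list of variable differences `x_{i,j} - x_{i,j+1}` for `1 ≤ i ≤ m`, `1 ≤ j ≤ n-1`,
in `k[X̌_1, …, X̌_m]` with `X̌_i = {x_{i1}, …, x_{in}}`. -/
def diffs (k : Type*) [Field k] (m n : ℕ) : List (MvPolynomial (Fin m × Fin n) k) :=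
  (List.finRange m).flatMap fun i =>
    (List.finRange (n - 1)).map fun j =>
      MvPolynomial.X (i, ⟨j.1, by have := j.isLt; omega⟩) -
        MvPolynomial.X (i, ⟨j.1 + 1, by have := j.isLt; omega⟩)

/-- `b + e_i`. -/
def addE {m : ℕ} (b : Fin m → ℕ) (i : Fin m) : Fin m → ℕ :=
  fun t => b t + if t = i then 1 else 0

/-- `c - e_i` (truncated subtraction). -/
def subE {m : ℕ} (c : Fin m → ℕ) (i : Fin m) : Fin m → ℕ :=
  fun t => c t - if t = i then 1 else 0

/-- The monomial `m(b) = m_1(b) ⋯ m_m(b)` with `m_i(b) = ∏_{j ∈ X_i(b)} x_{ij}`, determined by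
the maps `XM i = X_i : Δ_m(n) → B(n)`. -/
def monB (k : Type*) [Field k] {m n : ℕ} (XM : Fin m → (Fin m → ℕ) → Finset (Fin n))
    (b : Fin m → ℕ) : MvPolynomial (Fin m × Fin n) k :=
  ∏ i : Fin m, ∏ j ∈ XM i b, MvPolynomial.X (i, j)

/-- The ideal `J` generated by the monomials `m(b)`, `b ∈ Δ_m(n)`. -/
def JofX (k : Type*) [Field k] {m n : ℕ} (XM : Fin m → (Fin m → ℕ) → Finset (Fin n)) :
    Ideal (MvPolynomial (Fin m × Fin n) k) :=
  Ideal.span { p | ∃ b : Fin m → ℕ, (∑ t, b t) = n ∧ p = monB k XM b }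

/-- `J ⊆ k[X̌_1, …, X̌_m]` is a polarization of `(x_1, …, x_m)^n`: `J` is a squarefree monomial
ideal, the map `π : x_{ij} ↦ x_i` carries `J` onto `(x_1, …, x_m)^n`, and the variable
differences `x_{i,j} - x_{i,j+1}` form a regular sequence on the quotient by `J`. -/
def IsPolarizationMaxPow (k : Type*) [Field k] {m n : ℕ}
    (J : Ideal (MvPolynomial (Fin m × Fin n) k)) : Prop :=
  (∃ G : Set ((Fin m × Fin n) →₀ ℕ), (∀ d ∈ G, ∀ x, d x ≤ 1) ∧
    J = Ideal.span ((fun d => monomial d (1 : k)) '' G)) ∧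
  Ideal.map (rename Prod.fst : MvPolynomial (Fin m × Fin n) k →ₐ[k] MvPolynomial (Fin m) k) J
    = Ideal.span (Set.range MvPolynomial.X) ^ n ∧
  IsRegSeq (diffs k m n) J

/-- The edge `(c; i, j)` of `Δ_m(n)` (where `c ∈ Δ_m(n+1)` and `i, j ∈ supp c`) is a
linear syzygy edge: `X_p(c - e_i) = X_p(c - e_j)` for every `p ∈ supp(c) \ {i, j}`. -/
def LSedge {m n : ℕ} (XM : Fin m → (Fin m → ℕ) → Finset (Fin n))
    (c : Fin m → ℕ) (i j : Fin m) : Prop :=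
  ∀ p, 1 ≤ c p → p ≠ i → p ≠ j → XM p (subE c i) = XM p (subE c j)

/-- `u` and `v` are joined by a linear syzygy edge of `Δ_m(n)`: there are `r ≠ s` with
`u = c - e_r` and `v = c - e_s` for `c = u + e_r ∈ Δ_m(n+1)` (so `v = u - e_s + e_r`), and
`X_p(u) = X_p(v)` for every `p ∈ supp(c) \ {r, s}`. -/
def LSstep {m n : ℕ} (XM : Fin m → (Fin m → ℕ) → Finset (Fin n)) (u v : Fin m → ℕ) : Prop :=
  ∃ r s : Fin m, r ≠ s ∧ 1 ≤ u s ∧ v = addE (subE u s) r ∧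
    ∀ p, 1 ≤ addE u r p → p ≠ r → p ≠ s → XM p u = XM p v

/-- The tuples `u ∈ Δ_m(n)` with `u ≤ M` and `X_p(u) ⊆ S p` for all `p`. -/
def Adm {m n : ℕ} (XM : Fin m → (Fin m → ℕ) → Finset (Fin n)) (M : Fin m → ℕ)
    (S : Fin m → Finset (Fin n)) (u : Fin m → ℕ) : Prop :=
  (∑ t, u t) = n ∧ (∀ t, u t ≤ M t) ∧ ∀ p, XM p u ⊆ S p

/-- Connectedness by a path of linear syzygy edges through admissible tuples. -/
def Reach {m n : ℕ} (XM : Fin m → (Fin m → ℕ) → Finset (Fin n)) (M : Fin m → ℕ)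
    (S : Fin m → Finset (Fin n)) : (Fin m → ℕ) → (Fin m → ℕ) → Prop :=
  Relation.ReflTransGen fun u v => Adm XM M S u ∧ Adm XM M S v ∧ LSstep XM u v

/-- The graph of linear syzygy edges of the down-graph `D(c)`, where the vertex `c - e_i` is
represented by `i`. -/
def lsGraph {m n : ℕ} (XM : Fin m → (Fin m → ℕ) → Finset (Fin n)) (c : Fin m → ℕ) :
    SimpleGraph (Fin m) where
  Adj r s := r ≠ s ∧ 1 ≤ c r ∧ 1 ≤ c s ∧ LSedge XM c r s
  symm := ⟨fun _ _ h => ⟨h.1.symm, h.2.2.1, h.2.1,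
    fun p hp h1 h2 => (h.2.2.2 p hp h2 h1).symm⟩⟩
  loopless := ⟨fun _ h => h.1 rfl⟩

section Helpers

variable {m n : ℕ} {XM : Fin m → (Fin m → ℕ) → Finset (Fin n)}

lemma sum_addE (b : Fin m → ℕ) (i : Fin m) : (∑ t, addE b i t) = (∑ t, b t) + 1 := by
  simp [addE, Finset.sum_add_distrib]

lemma addE_subE (c : Fin m → ℕ) (i : Fin m) (h : 1 ≤ c i) : addE (subE c i) i = c := by
  funext t
  by_cases ht : t = i
  · subst ht; simp [addE, subE]; omega
  · simp [addE, subE, ht]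

lemma subE_addE (c : Fin m → ℕ) (i : Fin m) : subE (addE c i) i = c := by
  funext t
  simp [addE, subE]

lemma sum_subE {c : Fin m → ℕ} (i : Fin m) (h : 1 ≤ c i) (hc : (∑ t, c t) = n + 1) :
    (∑ t, subE c i t) = n := by
  have := sum_addE (subE c i) i
  rw [addE_subE c i h] at this
  omega

lemma subE_le (c : Fin m → ℕ) (i t : Fin m) : subE c i t ≤ c t := by
  simp [subE]

lemma eq_of_le_of_sum {a b : Fin m → ℕ} (h : ∀ t, b t ≤ a t) (ha : (∑ t, a t) = n)
    (hb : (∑ t, b t) = n) : a = b := by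
  funext t
  exact ((Finset.sum_eq_sum_iff_of_le (fun i _ => h i)).1 (hb.trans ha.symm) t
    (Finset.mem_univ t)).symm

lemma lsGraph_reachable
    (hconn : ∀ c : Fin m → ℕ, (∑ t, c t) = n + 1 →
      ∀ i j, 1 ≤ c i → 1 ≤ c j →
        Relation.ReflTransGen (fun r s => 1 ≤ c r ∧ 1 ≤ c s ∧ LSedge XM c r s) i j)
    {c : Fin m → ℕ} (hc : (∑ t, c t) = n + 1) {i j : Fin m} (hi : 1 ≤ c i) (hj : 1 ≤ c j) :
    (lsGraph XM c).Reachable i j := by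
  induction hconn c hc i j hi hj with
  | refl => exact SimpleGraph.Reachable.refl _
  | @tail x y _ h ih =>
    by_cases hxy : x = y
    · subst hxy; exact ih h.1
    · exact (ih h.1).trans (SimpleGraph.Adj.reachable ⟨hxy, h⟩)

lemma walk_pos {c : Fin m → ℕ} {i j : Fin m} (w : (lsGraph XM c).Walk i j) (hi : 1 ≤ c i) :
    ∀ x ∈ w.support, 1 ≤ c x := by
  induction w with
  | nil => simpa using hi
  | cons h w ih =>
    intro x hx
    rw [SimpleGraph.Walk.support_cons, List.mem_cons] at hx
    rcases hx with rfl | hx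
    · exact hi
    · exact ih h.2.2.1 x hx

/-- The set `X_p` is constant along walks of linear syzygy edges avoiding the vertex `p`. -/
lemma walk_const (hrank : ∀ i b, (∑ t, b t) = n → (XM i b).card = b i)
    {c : Fin m → ℕ} (hc : (∑ t, c t) = n + 1) {i j : Fin m}
    (w : (lsGraph XM c).Walk i j) {p : Fin m} (hp : p ∉ w.support) :
    XM p (subE c i) = XM p (subE c j) := by
  induction w with
  | nil => rfl
  | @cons x y z h w ih =>
    rw [SimpleGraph.Walk.support_cons, List.mem_cons, not_or] at hp
    rw [← ih hp.2]
    have hpy : p ≠ y := fun e => hp.2 (e ▸ w.start_mem_support)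
    by_cases hcp : 1 ≤ c p
    · exact h.2.2.2 p hcp hp.1 hpy
    · have hzero : ∀ q, 1 ≤ c q → XM p (subE c q) = ∅ := by
        intro q hq
        rw [← Finset.card_eq_zero, hrank p _ (sum_subE q hq hc)]
        have := subE_le c q p
        omega
      rw [hzero x h.2.1, hzero y h.2.2.1]

lemma LSstep_of_adj {c : Fin m → ℕ} {r s : Fin m} (h : (lsGraph XM c).Adj r s) :
    LSstep XM (subE c r) (subE c s) := by
  obtain ⟨hrs, hr, hs, he⟩ := h
  refine ⟨r, s, hrs, ?_, ?_, ?_⟩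
  · simp [subE, hrs.symm]; exact hs
  · funext t
    simp only [addE, subE]
    by_cases h1 : t = r
    · subst h1; simp [hrs]; omega
    · simp [h1]
  · rw [addE_subE c r hr]
    exact he

lemma reach_of_walk {M : Fin m → ℕ} {S : Fin m → Finset (Fin n)} {c : Fin m → ℕ} {i j : Fin m}
    (w : (lsGraph XM c).Walk i j) (h : ∀ x ∈ w.support, Adm XM M S (subE c x)) :
    Reach XM M S (subE c i) (subE c j) := by
  induction w with
  | nil => exact Relation.ReflTransGen.refl
  | @cons x y z hxy w ih =>
    refine Relation.ReflTransGen.head ⟨h x (by simp), h y (by simp), LSstep_of_adj hxy⟩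
      (ih fun x hx => h x (by simp [hx]))

/-- The case of two vertices of one down-graph. For a vertex `x` of a simple path from `j` to `i`
and `p ≠ x`, the path avoids `p` before or after `x`, so `X_p(c - e_x)` is `X_p(c - e_j)` or
`X_p(c - e_i)`. -/
lemma reach_of_downGraph (hrank : ∀ i b, (∑ t, b t) = n → (XM i b).card = b i)
    (hiso : ∀ (i : Fin m) (a b : Fin m → ℕ), (∑ t, a t) = n → (∑ t, b t) = n →
      a i ≤ b i → (∀ j, j ≠ i → b j ≤ a j) → XM i a ⊆ XM i b)
    {M : Fin m → ℕ} {S : Fin m → Finset (Fin n)} {c : Fin m → ℕ} (hc : (∑ t, c t) = n + 1)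
    {i j : Fin m} (hij : j ≠ i) (hj : 1 ≤ c j)
    (hr : (lsGraph XM c).Reachable j i)
    (aj : Adm XM M S (subE c j)) (ai : Adm XM M S (subE c i)) :
    Reach XM M S (subE c j) (subE c i) := by
  obtain ⟨w, hw⟩ := hr.exists_isPath
  refine reach_of_walk w fun x hx => ?_
  have hx1 := walk_pos w hj x hx
  refine ⟨sum_subE x hx1 hc, fun t => (subE_le c x t).trans ?_, fun p => ?_⟩
  · have h1 := aj.2.1 t
    have h2 := ai.2.1 t
    simp only [subE] at h1 h2
    by_cases ht : t = j
    · subst ht; simpa [hij] using h2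
    · simpa [ht] using h1
  · by_cases hpx : p = x
    · subst hpx
      refine (hiso p _ _ (sum_subE p hx1 hc) aj.1 ?_ ?_).trans (aj.2.2 p)
      · by_cases hpj : p = j
        · subst hpj; rfl
        · simp [subE, hpj]
      · intro t ht
        simp [subE, ht]
    · by_cases h1 : p ∈ (w.takeUntil x hx).support
      · by_cases h2 : p ∈ (w.dropUntil x hx).support
        · exfalso
          have hnd := hw.support_nodup
          rw [← w.take_spec hx, SimpleGraph.Walk.support_append, List.nodup_append] at hnd
          have h3 : p ∈ (w.dropUntil x hx).support.tail := by
            rw [SimpleGraph.Walk.mem_support_iff] at h2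
            exact h2.resolve_left hpx
          exact hnd.2.2 p h1 p h3 rfl
        · rw [walk_const hrank hc _ h2]; exact ai.2.2 p
      · rw [← walk_const hrank hc _ h1]; exact aj.2.2 p

lemma LSstep.set_eq {u v : Fin m → ℕ} (h : LSstep XM u v)
    (hrank : ∀ i b, (∑ t, b t) = n → (XM i b).card = b i)
    (hu : (∑ t, u t) = n) (hv : (∑ t, v t) = n) {p : Fin m} (hp : u p = v p) :
    XM p u = XM p v := by
  obtain ⟨r, s, hrs, hs, rfl, h⟩ := h
  have h1 : p ≠ r := by
    rintro rfl
    simp [addE, subE, hrs] at hp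
  have h2 : p ≠ s := by
    rintro rfl
    simp [addE, subE, h1] at hp
    omega
  by_cases h0 : u p = 0
  · have e1 : XM p u = ∅ := by rw [← Finset.card_eq_zero, hrank p u hu, h0]
    have e2 : XM p (addE (subE u s) r) = ∅ := by
      rw [← Finset.card_eq_zero, hrank p _ hv, ← hp, h0]
    rw [e1, e2]
  · refine h p ?_ h1 h2
    simp [addE, h1]; omega

lemma LSstep.subset {u v : Fin m → ℕ} (h : LSstep XM u v)
    (hrank : ∀ i b, (∑ t, b t) = n → (XM i b).card = b i)
    (hiso : ∀ (i : Fin m) (a b : Fin m → ℕ), (∑ t, a t) = n → (∑ t, b t) = n →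
      a i ≤ b i → (∀ j, j ≠ i → b j ≤ a j) → XM i a ⊆ XM i b)
    (hu : (∑ t, u t) = n) (hv : (∑ t, v t) = n) {p : Fin m} (hp : u p ≤ v p) :
    XM p u ⊆ XM p v := by
  rcases hp.eq_or_lt with hp | hp
  · rw [h.set_eq hrank hu hv hp]
  · obtain ⟨r, s, hrs, hs, rfl, h⟩ := h
    have hpr : p = r := by
      by_contra hne
      simp [addE, subE, hne] at hp
      omega
    subst hpr
    refine hiso p _ _ hu hv hp.le fun t ht => ?_
    simp [addE, subE, ht]

/-- Following a path from `u` to `b` backwards from `b`: either it is admissible for `M`, `S` all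
the way to `u`, or it is admissible back to the first tuple `b'` in which a coordinate in `P` drops
below its value in `b`. Before the first drop the sets `X_p`, `p ∈ P`, equal `X_p(b)`, so the bounds
`S' p` of the given path are only needed to lie in `S p` for `p ∉ P`. -/
lemma drop_or_const (hrank : ∀ i b, (∑ t, b t) = n → (XM i b).card = b i)
    (hiso : ∀ (i : Fin m) (a b : Fin m → ℕ), (∑ t, a t) = n → (∑ t, b t) = n →
      a i ≤ b i → (∀ j, j ≠ i → b j ≤ a j) → XM i a ⊆ XM i b)
    {M M' : Fin m → ℕ} {S S' : Fin m → Finset (Fin n)} {u b : Fin m → ℕ} (P : Fin m → Prop)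
    (hM : ∀ t, M' t ≤ M t) (hS : ∀ p, ¬ P p → S' p ⊆ S p) (hP : ∀ p, P p → M' p ≤ b p)
    (hb : Adm XM M S b) (h : Reach XM M' S' u b) :
    (Adm XM M S u ∧ Reach XM M S u b) ∨
      ∃ b', Adm XM M' S' b' ∧ Adm XM M S b' ∧ Reach XM M S b' b ∧ ∃ p, P p ∧ b' p < b p := by
  have key : (Adm XM M S u ∧ Reach XM M S u b ∧ ∀ p, P p → u p = b p ∧ XM p u = XM p b) ∨
      ∃ b', Adm XM M' S' b' ∧ Adm XM M S b' ∧ Reach XM M S b' b ∧ ∃ p, P p ∧ b' p < b p := by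
    induction h using Relation.ReflTransGen.head_induction_on with
    | refl => exact Or.inl ⟨hb, Relation.ReflTransGen.refl, fun p _ => ⟨rfl, rfl⟩⟩
    | @head x y hxy _ ih =>
      obtain ⟨ax, ay, hst⟩ := hxy
      rcases ih with ⟨hy, hyb, hc⟩ | h
      · have hle : ∀ p, P p → x p ≤ y p := fun p hp => by
          rw [(hc p hp).1]; exact (ax.2.1 p).trans (hP p hp)
        have hx : Adm XM M S x := by
          refine ⟨ax.1, fun t => (ax.2.1 t).trans (hM t), fun p => ?_⟩
          by_cases hp : P p
          · exact (hst.subset hrank hiso ax.1 ay.1 (hle p hp)).trans (hy.2.2 p)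
          · exact (ax.2.2 p).trans (hS p hp)
        have hxb : Reach XM M S x b := Relation.ReflTransGen.head ⟨hx, hy, hst⟩ hyb
        by_cases hd : ∃ p, P p ∧ x p < b p
        · exact Or.inr ⟨x, ax, hx, hxb, hd⟩
        · push Not at hd
          refine Or.inl ⟨hx, hxb, fun p hp => ?_⟩
          have hyp := hc p hp
          have e : x p = y p := le_antisymm (hle p hp) (hyp.1 ▸ hd p hp)
          exact ⟨e.trans hyp.1, (hst.set_eq hrank ax.1 ay.1 e).trans hyp.2⟩
      · exact Or.inr h
  rcases key with ⟨h1, h2, _⟩ | h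
  · exact Or.inl ⟨h1, h2⟩
  · exact Or.inr h

/-- The inductive step for the distance, with an inner induction on the length of a walk from `j`
to an `i` with `b_i < a_i`. -/
lemma reach_step (hrank : ∀ i b, (∑ t, b t) = n → (XM i b).card = b i)
    (hiso : ∀ (i : Fin m) (a b : Fin m → ℕ), (∑ t, a t) = n → (∑ t, b t) = n →
      a i ≤ b i → (∀ j, j ≠ i → b j ≤ a j) → XM i a ⊆ XM i b)
    (d : ℕ)
    (IH : ∀ (M : Fin m → ℕ) (S : Fin m → Finset (Fin n)) (a b : Fin m → ℕ),
      Adm XM M S a → Adm XM M S b → (∑ t, (b t - a t)) < d → Reach XM M S a b)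
    (M : Fin m → ℕ) (S : Fin m → Finset (Fin n)) (a : Fin m → ℕ) (j : Fin m)
    (ha : Adm XM M S a) :
    ∀ (r : ℕ) (b : Fin m → ℕ) (i : Fin m) (w : (lsGraph XM (addE a j)).Walk j i),
      w.length = r → Adm XM M S b → (∑ t, (b t - a t)) = d → a j < b j → b i < a i →
      Reach XM M S a b := by
  intro r
  induction r using Nat.strong_induction_on with
  | _ r ihr =>
  intro b i w hw hb hd hj hi
  by_cases hA : ∃ p ∈ w.support, p ≠ i ∧ b p < a p
  · obtain ⟨p, hp, hpi, hbp⟩ := hA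
    exact ihr _ (hw ▸ SimpleGraph.Walk.length_takeUntil_lt_length hp hpi) b p (w.takeUntil p hp)
      rfl hb hd hj hbp
  push Not at hA
  have hij : j ≠ i := by rintro rfl; omega
  have hc : (∑ t, addE a j t) = n + 1 := by rw [sum_addE, ha.1]
  have hcj : 1 ≤ addE a j j := by simp [addE]
  have hci : 1 ≤ addE a j i := walk_pos w hcj i w.end_mem_support
  have haj : subE (addE a j) j = a := subE_addE a j
  set u := subE (addE a j) i with hu
  have hus : (∑ t, u t) = n := sum_subE i hci hc
  have hui : u i = a i - 1 := by simp [hu, subE, addE, hij.symm]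
  have hut : ∀ t, t ≠ i → u t = a t + if t = j then 1 else 0 := by
    intro t ht; simp [hu, subE, addE, ht]
  have huX : ∀ p, ¬ (p ∈ w.support ∧ p ≠ i) → XM p u ⊆ XM p a := by
    intro p hp
    by_cases hpi : p = i
    · subst hpi
      refine hiso p _ _ hus ha.1 (by omega) fun t ht => ?_
      rw [hut t ht]; omega
    · have : p ∉ w.support := fun h => hp ⟨h, hpi⟩
      rw [hu, ← walk_const hrank hc w this, haj]
  have hub : Reach XM (fun t => max (u t) (b t)) (fun p => XM p u ∪ XM p b) u b := by
    refine IH _ _ _ _ ⟨hus, fun t => le_max_left _ _, fun p => Finset.subset_union_left⟩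
      ⟨hb.1, fun t => le_max_right _ _, fun p => Finset.subset_union_right⟩ ?_
    rw [← hd]
    refine Finset.sum_lt_sum (fun t _ => ?_) ⟨j, Finset.mem_univ j, ?_⟩
    · by_cases ht : t = i
      · subst ht; omega
      · rw [hut t ht]; omega
    · rw [hut j hij]; simp; omega
  have humax : ∀ t, max (u t) (b t) ≤ max (a t) (b t) := by
    intro t
    by_cases ht : t = i
    · subst ht; omega
    · rw [hut t ht]
      split_ifs with h
      · subst h; omega
      · omega
  rcases drop_or_const hrank hiso (M := M) (S := S) (fun p => p ∈ w.support ∧ p ≠ i)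
    (fun t => (humax t).trans (max_le (ha.2.1 t) (hb.2.1 t)))
    (fun p hp => Finset.union_subset ((huX p hp).trans (ha.2.2 p)) (hb.2.2 p))
    (fun p hp => (humax p).trans (max_le (hA p hp.1 hp.2) le_rfl)) hb hub with
    ⟨h1, h2⟩ | ⟨b', hbound, hadm, hreach, p, ⟨hpw, hpi⟩, hpb⟩
  · refine Relation.ReflTransGen.trans ?_ h2
    have := reach_of_downGraph hrank hiso hc hij hcj w.reachable
      (M := M) (S := S) (haj.symm ▸ ha) h1
    rwa [haj] at this
  · refine Relation.ReflTransGen.trans ?_ hreach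
    have hle : ∀ t, b' t - a t ≤ b t - a t := by
      intro t
      have h1 := (hbound.2.1 t).trans (humax t)
      omega
    have hsum : (∑ t, (b' t - a t)) ≤ d := hd ▸ Finset.sum_le_sum fun t _ => hle t
    rcases hsum.lt_or_eq with hlt | heq
    · exact IH _ _ _ _ ha hadm hlt
    · have hall := (Finset.sum_eq_sum_iff_of_le (fun t _ => hle t)).1 (heq.trans hd.symm)
      -- With equal distance no positive difference `b_t - a_t` has changed, so the drop at `p`
      -- happens where `a_p = b_p`, and `p` can replace `i`.
      have hj' := hall j (Finset.mem_univ j)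
      have hp' := hall p (Finset.mem_univ p)
      exact ihr _ (hw ▸ SimpleGraph.Walk.length_takeUntil_lt_length hpw hpi) b' p (w.takeUntil p hpw)
        rfl hadm heq (by omega) (by omega)

lemma reach_of_adm (hrank : ∀ i b, (∑ t, b t) = n → (XM i b).card = b i)
    (hiso : ∀ (i : Fin m) (a b : Fin m → ℕ), (∑ t, a t) = n → (∑ t, b t) = n →
      a i ≤ b i → (∀ j, j ≠ i → b j ≤ a j) → XM i a ⊆ XM i b)
    (hconn : ∀ c : Fin m → ℕ, (∑ t, c t) = n + 1 →
      ∀ i j, 1 ≤ c i → 1 ≤ c j →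
        Relation.ReflTransGen (fun r s => 1 ≤ c r ∧ 1 ≤ c s ∧ LSedge XM c r s) i j)
    (d : ℕ) : ∀ (M : Fin m → ℕ) (S : Fin m → Finset (Fin n)) (a b : Fin m → ℕ),
      Adm XM M S a → Adm XM M S b → (∑ t, (b t - a t)) = d → Reach XM M S a b := by
  induction d using Nat.strong_induction_on with
  | _ d IH =>
  intro M S a b ha hb hd
  by_cases hB : ∃ j, a j < b j
  · obtain ⟨j, hj⟩ := hB
    have hA : ∃ i, b i < a i := by
      by_contra! hA
      rw [eq_of_le_of_sum hA hb.1 ha.1] at hj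
      omega
    obtain ⟨i, hi⟩ := hA
    have hc : (∑ t, addE a j t) = n + 1 := by rw [sum_addE, ha.1]
    obtain ⟨w⟩ := lsGraph_reachable hconn hc (i := j) (j := i) (by simp [addE])
      (by simp only [addE]; omega)
    exact reach_step hrank hiso d (fun M S a b ha hb h => IH _ h M S a b ha hb rfl) M S a j ha
      _ b i w rfl hb hd hj hi
  · push Not at hB
    rw [eq_of_le_of_sum hB ha.1 hb.1]
    exact Relation.ReflTransGen.refl

lemma exists_path_of_reflTransGen {α : Type*} {R : α → α → Prop} {a b : α}
    (h : Relation.ReflTransGen R a b) :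
    ∃ (N : ℕ) (pth : Fin (N + 1) → α), pth 0 = a ∧ pth (Fin.last N) = b ∧
      ∀ t : Fin N, R (pth t.castSucc) (pth t.succ) := by
  induction h using Relation.ReflTransGen.head_induction_on with
  | refl => exact ⟨0, fun _ => b, rfl, rfl, fun t => t.elim0⟩
  | @head x y hxy _ ih =>
    obtain ⟨N, pth, h0, h1, h2⟩ := ih
    refine ⟨N + 1, Fin.cons x pth, rfl, ?_, fun t => ?_⟩
    · rw [← Fin.succ_last, Fin.cons_succ, h1]
    · refine Fin.cases ?_ (fun t => ?_) t
      · simpa [h0] using hxy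
      · rw [← Fin.succ_castSucc, Fin.cons_succ, Fin.cons_succ]
        exact h2 t

end Helpers

/-- Suppose that for every `c ∈ Δ_m(n+1)` the linear syzygy edges of the
down-graph `D(c)` contain a spanning tree of `D(c)`.  Then for any `a, b ∈ Δ_m(n)` there is a
path `a = b_0, b_1, …, b_N = b` in `Δ_m(n)` such that (1) every `b_t ≤ a ∨ b` componentwise,
(2) every `m(b_t)` divides `lcm(m(a), m(b)) = ∏_i ∏_{j ∈ X_i(a) ∪ X_i(b)} x_{ij}`, and
(3) each step from `b_{t-1}` to `b_t` is along a linear syzygy edge. -/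
theorem stmt_8 {k : Type*} [Field k] {m n : ℕ}
    (XM : Fin m → (Fin m → ℕ) → Finset (Fin n))
    (hrank : ∀ i b, (∑ t, b t) = n → (XM i b).card = b i)
    (hiso : ∀ (i : Fin m) (a b : Fin m → ℕ), (∑ t, a t) = n → (∑ t, b t) = n →
      a i ≤ b i → (∀ j, j ≠ i → b j ≤ a j) → XM i a ⊆ XM i b)
    (hconn : ∀ c : Fin m → ℕ, (∑ t, c t) = n + 1 →
      ∀ i j, 1 ≤ c i → 1 ≤ c j →
        Relation.ReflTransGen (fun r s => 1 ≤ c r ∧ 1 ≤ c s ∧ LSedge XM c r s) i j)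
    (a b : Fin m → ℕ) (ha : (∑ t, a t) = n) (hb : (∑ t, b t) = n) :
    ∃ (N : ℕ) (pth : Fin (N + 1) → Fin m → ℕ),
      pth 0 = a ∧ pth (Fin.last N) = b ∧
      (∀ t, (∑ i, pth t i) = n) ∧
      (∀ t i, pth t i ≤ max (a i) (b i)) ∧
      (∀ t, monB k XM (pth t) ∣
        ∏ i : Fin m, ∏ j ∈ XM i a ∪ XM i b,
          (MvPolynomial.X (i, j) : MvPolynomial (Fin m × Fin n) k)) ∧
      (∀ t : Fin N, LSstep XM (pth t.castSucc) (pth t.succ)) := by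
  have hA : Adm XM (fun t => max (a t) (b t)) (fun p => XM p a ∪ XM p b) a :=
    ⟨ha, fun t => le_max_left _ _, fun p => Finset.subset_union_left⟩
  have hB : Adm XM (fun t => max (a t) (b t)) (fun p => XM p a ∪ XM p b) b :=
    ⟨hb, fun t => le_max_right _ _, fun p => Finset.subset_union_right⟩
  obtain ⟨N, pth, h0, h1, h2⟩ :=
    exists_path_of_reflTransGen (reach_of_adm hrank hiso hconn _ _ _ a b hA hB rfl)
  have hadm : ∀ t, Adm XM (fun t => max (a t) (b t)) (fun p => XM p a ∪ XM p b) (pth t) := by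
    intro t
    refine Fin.cases ?_ (fun t => (h2 t).2.1) t
    rw [h0]; exact hA
  refine ⟨N, pth, h0, h1, fun t => (hadm t).1, fun t => (hadm t).2.1, fun t => ?_,
    fun t => (h2 t).2.2⟩
  exact Finset.prod_dvd_prod_of_dvd _ _ fun i _ =>
    Finset.prod_dvd_prod_of_subset _ _ _ ((hadm t).2.2 i)
end
end

section
/- Let X, Y, Z be rank-preserving isotone maps from Δ_3(n) to B(n) defining a polarization of (x_1,x_2,x_3)^n (equivalently, satisfying the spanning-tree condition on linear syzygy edges in every down-graph). Let I be the ideal of k[X̌_1, X̌_2, X̌_3] generated by all rainbow monomials x_α y_β z_γ such that for some (a,b,c) ∈ Δ_3(n−1) one has α ∈ X(a+1,b,c), β ∈ Y(a,b+1,c) and γ ∈ Z(a,b,c+1). Then I has linear quotients: its generators can be totally ordered so that for each generator u, the colon ideal of the ideal generated by all earlier generators with respect to u is generated by variables. -/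
/-! Put `m = n - 1` and, for `a ∈ Δ_3(m)`, write `X(a), Y(a), Z(a)` for `X(a + e_1)`, `Y(a + e_2)`,
`Z(a + e_3)`.  The generators are the words `(α, β, γ)` lying in some box `X(a) × Y(a) × Z(a)`.
The spanning-tree condition says that on each small triangle `d + e_1, d + e_2, d + e_3` at most
one of the equalities `X(d + e_2) = X(d + e_3)`, `Y(d + e_1) = Y(d + e_3)`,
`Z(d + e_1) = Z(d + e_2)` fails.

The set `Y(a)` has exactly one element `β(a)` outside `Y(a + e_1 - e_2)`, and `Z(a)` exactly one
element `γ(a)` outside `Z(a + e_1 - e_3)`.  Positions `a` are ordered (`posKey`) by decreasing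
first coordinate; inside a row they are ordered by a height function, which moves up
across a failing `Z`-equality and down across a failing `Y`-equality.  Two facts carry the proof.

* `exists_smaller_box`: a word in the box at `a` with `β ≠ β(a)` or `γ ≠ γ(a)` lies in a box of
  strictly smaller key.
* `mem_minus_of_key_le`: if `b ≠ a` has key at most that of `a` and `(β', γ') ∈ Y(b) × Z(b)`, then
  `β' ∈ Y(a) \ {β(a)}` or `γ' ∈ Z(a) \ {γ(a)}`.

Order the generators by the smallest key of a box containing them.  If `K` has minimal box `a`,
then `K = (α, β(a), γ(a))` by the first fact.  For an earlier `L = (α', β', γ')` whose minimal box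
is also at `a`, the words `L` and `K` differ only in the first letter.  Otherwise the second fact
allows replacing one letter of `K` by the corresponding letter of `L` inside the box at `a`, and by
the first fact the new word comes earlier than `K`.  This exchange property is linear quotients
(`linearQuotients_of_key`). -/

open MvPolynomial

noncomputable section

/-! ### Linear quotients of rainbow monomials -/

/-- The exponent vector of the rainbow monomial `∏ i, x_{i, v i}`. -/
def rainbowExp {n : ℕ} (v : Fin 3 → Fin n) : (Fin 3 × Fin n) →₀ ℕ :=
  ∑ i, Finsupp.single (i, v i) 1

lemma rainbowExp_apply {n : ℕ} (v : Fin 3 → Fin n) (i : Fin 3) (x : Fin n) :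
    rainbowExp v (i, x) = if v i = x then 1 else 0 := by
  simp only [rainbowExp, Finsupp.coe_finsetSum, Finset.sum_apply, Finsupp.single_apply,
    Prod.mk.injEq]
  rw [Finset.sum_eq_single i] <;> simp +contextual

lemma rainbowExp_injective {n : ℕ} : Function.Injective (rainbowExp (n := n)) := by
  intro v w h
  funext i
  have := DFunLike.congr_fun h (i, w i)
  rw [rainbowExp_apply, rainbowExp_apply] at this
  by_contra hne
  simp [hne] at this

lemma prod_X_eq (k : Type*) [Field k] {n : ℕ} (v : Fin 3 → Fin n) :
    (∏ i : Fin 3, (MvPolynomial.X (i, v i) : MvPolynomial (Fin 3 × Fin n) k)) =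
      monomial (rainbowExp v) 1 := by
  rw [rainbowExp, monomial_sum_one]
  rfl

/-- A combinatorial criterion for linear quotients.  Suppose that a set `G` of rainbow words carries
a `key` such that for any two words `L ≠ K` of `G` with `key L ≤ key K`, some letter of `K` can be
replaced by the different letter of `L` in the same position, giving a word of `G` that either is
`L` itself or has a smaller key.  Then any enumeration of `G` with weakly increasing keys
exhibits linear quotients. -/
lemma linearQuotients_of_key {k : Type*} [Field k] {n : ℕ} {κ : Type*} [LinearOrder κ]
    (G : Set (Fin 3 → Fin n)) (key : (Fin 3 → Fin n) → κ)
    (hG : ∀ K ∈ G, ∀ L ∈ G, L ≠ K → key L ≤ key K → ∃ i, L i ≠ K i ∧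
      Function.update K i (L i) ∈ G ∧
        (key (Function.update K i (L i)) < key K ∨ Function.update K i (L i) = L)) :
    ∃ (N : ℕ) (u : Fin N → MvPolynomial (Fin 3 × Fin n) k),
      Function.Injective u ∧
      Set.range u = { p | ∃ v ∈ G,
          p = ∏ i : Fin 3, (MvPolynomial.X (i, v i) : MvPolynomial (Fin 3 × Fin n) k) } ∧
      ∀ K : Fin N, ∃ S : Set (Fin 3 × Fin n), ∀ g,
        g * u K ∈ Ideal.span { q | ∃ L, L < K ∧ q = u L } ↔
          g ∈ Ideal.span (MvPolynomial.X '' S) := by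
  classical
  obtain ⟨N, ⟨e0⟩⟩ : ∃ N, Nonempty (Fin N ≃ G) :=
    ⟨Fintype.card G, ⟨(Fintype.equivFin G).symm⟩⟩
  let σ := Tuple.sort (fun i => key (e0 i))
  let e : Fin N ≃ G := σ.trans e0
  have hmono : Monotone (fun i => key (e i)) := Tuple.monotone_sort (fun i => key (e0 i))
  let d : Fin N → ((Fin 3 × Fin n) →₀ ℕ) := fun K => rainbowExp (e K : Fin 3 → Fin n)
  have hdinj : Function.Injective d :=
    rainbowExp_injective.comp (Subtype.val_injective.comp e.injective)
  refine ⟨N, fun K => monomial (d K) 1, ?_, ?_, ?_⟩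
  · intro K L h
    exact hdinj (monomial_left_injective one_ne_zero h)
  · ext p
    simp only [Set.mem_range, Set.mem_ofPred_eq, prod_X_eq]
    constructor
    · rintro ⟨K, rfl⟩
      exact ⟨e K, (e K).2, rfl⟩
    · rintro ⟨v, hv, rfl⟩
      exact ⟨e.symm ⟨v, hv⟩, by simp [d]⟩
  · intro K
    refine ⟨{x | x.2 ≠ (e K : Fin 3 → Fin n) x.1 ∧
      ∃ M < K, (e M : Fin 3 → Fin n) = Function.update (e K : Fin 3 → Fin n) x.1 x.2}, fun g => ?_⟩
    have hset : { q | ∃ L, L < K ∧ q = (monomial (d L) (1 : k)) } =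
        (fun s => monomial s (1 : k)) '' (d '' {L | L < K}) := by
      ext q
      simp [eq_comm]
    rw [hset]
    constructor
    · intro h
      rw [mem_ideal_span_monomial_image] at h
      rw [mem_ideal_span_X_image]
      intro m hm
      have hmem : m + d K ∈ (g * monomial (d K) (1 : k)).support := by
        rw [mem_support_iff, coeff_mul_monomial, mul_one]
        exact mem_support_iff.1 hm
      obtain ⟨_, ⟨L, hL, rfl⟩, hle⟩ := h _ hmem
      have hL : L < K := hL
      have hne : (e L : Fin 3 → Fin n) ≠ e K := fun h =>
        hL.ne (e.injective (Subtype.ext h))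
      obtain ⟨i, hi, hMG, hM⟩ := hG _ (e K).2 _ (e L).2 hne (hmono hL.le)
      have heM : (e (e.symm ⟨_, hMG⟩) : Fin 3 → Fin n) = _ :=
        congrArg Subtype.val (e.apply_symm_apply ⟨_, hMG⟩)
      refine ⟨(i, (e L : Fin 3 → Fin n) i), ⟨hi, e.symm ⟨_, hMG⟩, ?_, heM⟩, ?_⟩
      · rcases hM with hM | hM
        · by_contra hcon
          have := hmono (not_lt.1 hcon)
          simp only [heM] at this
          exact absurd hM (not_lt.2 this)
        · have : e.symm ⟨_, hMG⟩ = L := by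
            apply e.injective
            apply Subtype.ext
            exact heM.trans hM
          rw [this]
          exact hL
      · have h1 := hle (i, (e L : Fin 3 → Fin n) i)
        simp only [d, Finsupp.add_apply, rainbowExp_apply, if_true] at h1
        rw [if_neg (fun h => hi h.symm)] at h1
        omega
    · intro h
      rw [mul_comm, ← smul_eq_mul]
      induction h using Submodule.span_induction with
      | zero => simp
      | add x y _ _ hx hy => rw [smul_add]; exact Ideal.add_mem _ hx hy
      | smul c x _ hx =>
        rw [smul_comm]
        exact Ideal.mul_mem_left _ _ hx
      | mem x hx =>
        obtain ⟨⟨i, x⟩, ⟨hne, M, hMK, hM⟩, rfl⟩ := hx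
        have hexp : Finsupp.single (i, x) 1 + d K =
            Finsupp.single (i, (e K : Fin 3 → Fin n) i) 1 + d M := by
          ext ⟨j, y⟩
          simp only [d, Finsupp.add_apply, rainbowExp_apply, hM, Finsupp.single_apply,
            Prod.mk.injEq]
          by_cases hj : i = j
          · subst hj
            simp [add_comm]
          · simp [hj, Function.update_of_ne (Ne.symm hj)]
        have : (monomial (d K) (1 : k)) • (MvPolynomial.X (i, x)) =
            MvPolynomial.X (i, (e K : Fin 3 → Fin n) i) * monomial (d M) (1 : k) := by
          rw [smul_eq_mul, mul_comm, MvPolynomial.X, MvPolynomial.X, monomial_mul, monomial_mul,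
            hexp]
        rw [this]
        exact Ideal.mul_mem_left _ _ (Ideal.subset_span ⟨_, ⟨M, hMK, rfl⟩, rfl⟩)

/-! ### Boxes over the triangle and their order -/

/-- The hypotheses on `X, Y, Z` shifted to the triangle `Δ_3(m)`, `m = n - 1`, with
`X r j l` standing for `X((r, j, l) + e_1)`, and likewise for `Y` and `Z`.  The field `tri` is the
spanning-tree condition: on each small triangle `d + e_1, d + e_2, d + e_3` at most one of the
three equalities fails. -/
structure TriangleData {ι : Type*} (m : ℕ) (X Y Z : ℕ → ℕ → ℕ → Finset ι) : Prop where
  cardY : ∀ {r j l}, r + j + l = m → (Y r j l).card = j + 1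
  cardZ : ∀ {r j l}, r + j + l = m → (Z r j l).card = l + 1
  monoX : ∀ {r j l r' j' l'}, r + j + l = m → r' + j' + l' = m → r ≤ r' → j' ≤ j → l' ≤ l →
    X r j l ⊆ X r' j' l'
  monoY : ∀ {r j l r' j' l'}, r + j + l = m → r' + j' + l' = m → r' ≤ r → j ≤ j' → l' ≤ l →
    Y r j l ⊆ Y r' j' l'
  monoZ : ∀ {r j l r' j' l'}, r + j + l = m → r' + j' + l' = m → r' ≤ r → j' ≤ j → l ≤ l' →
    Z r j l ⊆ Z r' j' l'
  tri : ∀ {r j l}, r + j + l + 1 = m →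
    (X r (j + 1) l = X r j (l + 1) ∧ Y (r + 1) j l = Y r j (l + 1)) ∨
    (X r (j + 1) l = X r j (l + 1) ∧ Z (r + 1) j l = Z r (j + 1) l) ∨
    (Y (r + 1) j l = Y r j (l + 1) ∧ Z (r + 1) j l = Z r (j + 1) l)

/-- The value of `Y` at the neighbour `a + e_1 - e_2` of `a = (r, j, l)`, empty if `j = 0`.
It is `Y r j l` with one element removed. -/
def yMinus {ι : Type*} (Y : ℕ → ℕ → ℕ → Finset ι) (r j l : ℕ) : Finset ι :=
  match j with
  | 0 => ∅
  | j + 1 => Y (r + 1) j l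

/-- The value of `Z` at the neighbour `a + e_1 - e_3` of `a = (r, j, l)`, empty if `l = 0`.
It is `Z r j l` with one element removed. -/
def zMinus {ι : Type*} (Z : ℕ → ℕ → ℕ → Finset ι) (r j l : ℕ) : Finset ι :=
  match l with
  | 0 => ∅
  | l + 1 => Z (r + 1) j l

open Classical in
/-- The height of position `j` in row `r`: between consecutive positions `(r, i, l + 1)` and
`(r, i + 1, l)` it rises by one if the `Z`-equality of the small triangle above them fails, and
drops by one if the `Y`-equality fails. -/
def height {ι : Type*} (m : ℕ) (Y Z : ℕ → ℕ → ℕ → Finset ι) (r j : ℕ) : ℤ :=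
  ∑ i ∈ Finset.range j,
    ((if Z (r + 1) i (m - 1 - r - i) = Z r (i + 1) (m - 1 - r - i) then 0 else 1) -
      (if Y (r + 1) i (m - 1 - r - i) = Y r i (m - 1 - r - i + 1) then 0 else 1))

/-- Positions are ordered by decreasing row index, and by height within a row. -/
def posKey {ι : Type*} (m : ℕ) (Y Z : ℕ → ℕ → ℕ → Finset ι) (r j : ℕ) : ℤ ×ₗ ℤ :=
  toLex (-(r : ℤ), height m Y Z r j)

/-- The word `v` lies in the box `X(a) × Y(a) × Z(a)` at the position `a = (r, j, l)`. -/
def InBox {ι : Type*} (m : ℕ) (X Y Z : ℕ → ℕ → ℕ → Finset ι) (r j l : ℕ) (v : Fin 3 → ι) : Prop :=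
  r + j + l = m ∧ v 0 ∈ X r j l ∧ v 1 ∈ Y r j l ∧ v 2 ∈ Z r j l

namespace TriangleData

variable {ι : Type*} {m : ℕ} {X Y Z : ℕ → ℕ → ℕ → Finset ι}

lemma height_succ_of_z (h : TriangleData m X Y Z) {r j l : ℕ} (hs : r + j + l + 1 = m)
    (hz : Z (r + 1) j l ≠ Z r (j + 1) l) :
    height m Y Z r (j + 1) = height m Y Z r j + 1 := by
  have hl : m - 1 - r - j = l := by omega
  have hy : Y (r + 1) j l = Y r j (l + 1) := by
    have := h.tri hs
    tauto
  rw [height, Finset.sum_range_succ, hl, if_neg hz, if_pos hy]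
  simp [height]

lemma height_succ_of_y (h : TriangleData m X Y Z) {r j l : ℕ} (hs : r + j + l + 1 = m)
    (hy : Y (r + 1) j l ≠ Y r j (l + 1)) :
    height m Y Z r (j + 1) = height m Y Z r j - 1 := by
  have hl : m - 1 - r - j = l := by omega
  have hz : Z (r + 1) j l = Z r (j + 1) l := by
    have := h.tri hs
    tauto
  rw [height, Finset.sum_range_succ, hl, if_neg hy, if_pos hz]
  simp [height, sub_eq_add_neg]

lemma yMinus_subset (h : TriangleData m X Y Z) {r j l : ℕ} (hs : r + j + l = m) :
    yMinus Y r j l ⊆ Y r j l := by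
  cases j with
  | zero => simp [yMinus]
  | succ j => exact h.monoY (by omega) hs (by omega) (by omega) le_rfl

lemma zMinus_subset (h : TriangleData m X Y Z) {r j l : ℕ} (hs : r + j + l = m) :
    zMinus Z r j l ⊆ Z r j l := by
  cases l with
  | zero => simp [zMinus]
  | succ l => exact h.monoZ (by omega) hs (by omega) le_rfl (by omega)

/-- `Y r j l` has only one element outside `yMinus Y r j l`. -/
lemma eq_of_notMem_yMinus (h : TriangleData m X Y Z) {r j l : ℕ} (hs : r + j + l = m) {x y : ι}
    (hx : x ∈ Y r j l) (hy : y ∈ Y r j l) (hx' : x ∉ yMinus Y r j l) (hy' : y ∉ yMinus Y r j l) :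
    x = y := by
  classical
  have hc : (Y r j l \ yMinus Y r j l).card ≤ 1 := by
    rw [Finset.card_sdiff_of_subset (h.yMinus_subset hs), h.cardY hs]
    cases j with
    | zero => simp [yMinus]
    | succ j => simp only [yMinus]; rw [h.cardY (by omega)]; omega
  exact Finset.card_le_one.1 hc x (by simp [hx, hx']) y (by simp [hy, hy'])

/-- `Z r j l` has only one element outside `zMinus Z r j l`. -/
lemma eq_of_notMem_zMinus (h : TriangleData m X Y Z) {r j l : ℕ} (hs : r + j + l = m) {x y : ι}
    (hx : x ∈ Z r j l) (hy : y ∈ Z r j l) (hx' : x ∉ zMinus Z r j l) (hy' : y ∉ zMinus Z r j l) :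
    x = y := by
  classical
  have hc : (Z r j l \ zMinus Z r j l).card ≤ 1 := by
    rw [Finset.card_sdiff_of_subset (h.zMinus_subset hs), h.cardZ hs]
    cases l with
    | zero => simp [zMinus]
    | succ l => simp only [zMinus]; rw [h.cardZ (by omega)]; omega
  exact Finset.card_le_one.1 hc x (by simp [hx, hx']) y (by simp [hy, hy'])

/-- A word of a box whose `y`-letter or `z`-letter is not the exceptional one of that box already
lies in a box of smaller key: in the neighbouring box one row up, or else the failing equality
identifies the other two and the word lies in a neighbouring box of the same row. -/
lemma exists_smaller_box (h : TriangleData m X Y Z) {r j l : ℕ} {v : Fin 3 → ι}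
    (hv : InBox m X Y Z r j l v) (hm : v 1 ∈ yMinus Y r j l ∨ v 2 ∈ zMinus Z r j l) :
    ∃ r' j' l', InBox m X Y Z r' j' l' v ∧ posKey m Y Z r' j' < posKey m Y Z r j := by
  obtain ⟨hs, hx, hy, hz⟩ := hv
  rcases hm with hm | hm
  · cases j with
    | zero => simp [yMinus] at hm
    | succ j =>
      simp only [yMinus] at hm
      have hs' : r + j + l + 1 = m := by omega
      by_cases hz' : v 2 ∈ Z (r + 1) j l
      · refine ⟨r + 1, j, l, ⟨by omega, ?_, hm, hz'⟩, ?_⟩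
        · exact h.monoX hs (by omega) (by omega) (by omega) le_rfl hx
        · rw [posKey, posKey, Prod.Lex.toLex_lt_toLex]
          left
          push_cast
          linarith
      · have hbad : Z (r + 1) j l ≠ Z r (j + 1) l := fun he => hz' (he ▸ hz)
        obtain ⟨hX, hY⟩ : X r (j + 1) l = X r j (l + 1) ∧ Y (r + 1) j l = Y r j (l + 1) := by
          have := h.tri hs'
          tauto
        refine ⟨r, j, l + 1, ⟨by omega, hX ▸ hx, hY ▸ hm, ?_⟩, ?_⟩
        · exact h.monoZ hs (by omega) le_rfl (by omega) (by omega) hz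
        · rw [posKey, posKey, Prod.Lex.toLex_lt_toLex]
          right
          refine ⟨rfl, ?_⟩
          simp only [h.height_succ_of_z hs' hbad]
          linarith
  · cases l with
    | zero => simp [zMinus] at hm
    | succ l =>
      simp only [zMinus] at hm
      have hs' : r + j + l + 1 = m := by omega
      by_cases hy' : v 1 ∈ Y (r + 1) j l
      · refine ⟨r + 1, j, l, ⟨by omega, ?_, hy', hm⟩, ?_⟩
        · exact h.monoX hs (by omega) (by omega) le_rfl (by omega) hx
        · rw [posKey, posKey, Prod.Lex.toLex_lt_toLex]
          left
          push_cast
          linarith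
      · have hbad : Y (r + 1) j l ≠ Y r j (l + 1) := fun he => hy' (he ▸ hy)
        obtain ⟨hX, hZ⟩ : X r (j + 1) l = X r j (l + 1) ∧ Z (r + 1) j l = Z r (j + 1) l := by
          have := h.tri hs'
          tauto
        refine ⟨r, j + 1, l, ⟨by omega, hX ▸ hx, ?_, hZ ▸ hm⟩, ?_⟩
        · exact h.monoY hs (by omega) le_rfl (by omega) (by omega) hy
        · rw [posKey, posKey, Prod.Lex.toLex_lt_toLex]
          right
          refine ⟨rfl, ?_⟩
          simp only [h.height_succ_of_y hs' hbad]
          linarith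

/-- The pair of letters `β, γ` at a position in a higher row can be moved down until it is beside
`(r, j, l)`, where isotonicity applies. -/
lemma mem_minus_of_row_lt (h : TriangleData m X Y Z) {r j l : ℕ} (hs : r + j + l = m) {β γ : ι}
    (r' : ℕ) (hr : r < r') : ∀ {j' l' : ℕ}, r' + j' + l' = m →
    β ∈ Y r' j' l' → γ ∈ Z r' j' l' → β ∈ yMinus Y r j l ∨ γ ∈ zMinus Z r j l := by
  induction r', hr using Nat.le_induction with
  | base =>
    intro j' l' hs' hβ hγ
    by_cases hj : j ≤ j'
    · right
      obtain ⟨l, rfl⟩ : ∃ q, l = q + 1 := ⟨l - 1, by omega⟩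
      exact h.monoZ hs' (by omega) (by omega) hj (by omega) hγ
    · left
      obtain ⟨j, rfl⟩ : ∃ q, j = q + 1 := ⟨j - 1, by omega⟩
      exact h.monoY hs' (by omega) (by omega) (by omega) (by omega) hβ
  | succ r' hr ih =>
    intro j' l' hs' hβ hγ
    have hd : r' + j' + l' + 1 = m := by omega
    have hdown : Y (r' + 1) j' l' = Y r' j' (l' + 1) ∨ Z (r' + 1) j' l' = Z r' (j' + 1) l' := by
      have := h.tri hd
      tauto
    rcases hdown with he | he
    · exact ih (j' := j') (l' := l' + 1) (by omega) (he ▸ hβ)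
        (h.monoZ hs' (by omega) (by omega) le_rfl (by omega) hγ)
    · exact ih (j' := j' + 1) (l' := l') (by omega)
        (h.monoY hs' (by omega) (by omega) (by omega) le_rfl hβ) (he ▸ hγ)

/-- If `γ` is the exceptional letter of `Z` at `(r, j, l)` and still occurs further right in the
row, then the `Z`-equalities in between all fail, so the height increases. -/
lemma height_lt_of_z (h : TriangleData m X Y Z) {r j l j' l' : ℕ} (hs : r + j + l = m)
    (hs' : r + j' + l' = m) (hj : j < j') {γ : ι} (hγ : γ ∈ Z r j' l')
    (hγ' : γ ∉ zMinus Z r j l) : height m Y Z r j < height m Y Z r j' := by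
  have key : ∀ i, j ≤ i → i ≤ j' → height m Y Z r i = height m Y Z r j + (i - j : ℤ) := by
    intro i hi
    induction i, hi using Nat.le_induction with
    | base => simp
    | succ i hi ih =>
      intro hi'
      obtain ⟨q, hq⟩ : ∃ q, r + i + q + 1 = m := ⟨m - r - i - 1, by omega⟩
      rw [h.height_succ_of_z hq, ih (by omega)]
      · push_cast
        ring
      · intro he
        apply hγ'
        have h1 : γ ∈ Z r (i + 1) q := h.monoZ hs' (by omega) le_rfl hi' (by omega) hγ
        rw [← he] at h1
        obtain ⟨l, rfl⟩ : ∃ q, l = q + 1 := ⟨l - 1, by omega⟩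
        exact h.monoZ (by omega) (by omega) le_rfl hi (by omega) h1
  rw [key j' hj.le le_rfl]
  omega

/-- If `β` is the exceptional letter of `Y` at `(r, j, l)` and already occurs further left in the
row, then the `Y`-equalities in between all fail, so the height decreases. -/
lemma height_lt_of_y (h : TriangleData m X Y Z) {r j l j' l' : ℕ} (hs : r + j + l = m)
    (hs' : r + j' + l' = m) (hj : j' < j) {β : ι} (hβ : β ∈ Y r j' l')
    (hβ' : β ∉ yMinus Y r j l) : height m Y Z r j < height m Y Z r j' := by
  have key : ∀ i, j' ≤ i → i ≤ j → height m Y Z r i = height m Y Z r j' - (i - j' : ℤ) := by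
    intro i hi
    induction i, hi using Nat.le_induction with
    | base => simp
    | succ i hi ih =>
      intro hi'
      obtain ⟨q, hq⟩ : ∃ q, r + i + q + 1 = m := ⟨m - r - i - 1, by omega⟩
      rw [h.height_succ_of_y hq, ih (by omega)]
      · push_cast
        ring
      · intro he
        apply hβ'
        have h1 : β ∈ Y r i (q + 1) := h.monoY hs' (by omega) le_rfl hi (by omega) hβ
        rw [← he] at h1
        obtain ⟨j, rfl⟩ : ∃ q, j = q + 1 := ⟨j - 1, by omega⟩
        exact h.monoY (by omega) (by omega) le_rfl (by omega) (by omega) h1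
  rw [key j hj.le le_rfl]
  omega

/-- A pair of letters `β, γ` at a different position of weakly smaller key contains a
non-exceptional letter of the box at `(r, j, l)`. -/
lemma mem_minus_of_key_le (h : TriangleData m X Y Z) {r j l r' j' l' : ℕ} (hs : r + j + l = m)
    (hs' : r' + j' + l' = m) (hne : ¬ (r' = r ∧ j' = j))
    (hkey : posKey m Y Z r' j' ≤ posKey m Y Z r j) {β γ : ι}
    (hβ : β ∈ Y r' j' l') (hγ : γ ∈ Z r' j' l') :
    β ∈ yMinus Y r j l ∨ γ ∈ zMinus Z r j l := by
  rw [posKey, posKey, Prod.Lex.toLex_le_toLex] at hkey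
  rcases hkey with hlt | ⟨heq, hle⟩
  · exact h.mem_minus_of_row_lt hs r' (by simp only at hlt; omega) hs' hβ hγ
  · obtain rfl : r' = r := by simp only at heq; omega
    simp only at hle
    by_contra hcon
    push Not at hcon
    rcases lt_or_gt_of_ne (fun he => hne ⟨rfl, he⟩ : j' ≠ j) with hj | hj
    · exact absurd (h.height_lt_of_y hs hs' hj hβ hcon.1) (not_lt.2 hle)
    · exact absurd (h.height_lt_of_z hs hs' hj hγ hcon.2) (not_lt.2 hle)

/-- Among the boxes containing a word there is one of smallest key. -/
lemma exists_key (m : ℕ) (X Y Z : ℕ → ℕ → ℕ → Finset ι) (v : Fin 3 → ι) :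
    ∃ t : ℕ × ℕ × ℕ, (∃ r j l, InBox m X Y Z r j l v) → InBox m X Y Z t.1 t.2.1 t.2.2 v ∧
      ∀ r j l, InBox m X Y Z r j l v → posKey m Y Z t.1 t.2.1 ≤ posKey m Y Z r j := by
  classical
  by_cases hex : ∃ r j l, InBox m X Y Z r j l v
  · let T := (Finset.range (m + 1) ×ˢ Finset.range (m + 1) ×ˢ Finset.range (m + 1)).filter
      (fun t => InBox m X Y Z t.1 t.2.1 t.2.2 v)
    have hT : ∀ r j l, InBox m X Y Z r j l v → (r, j, l) ∈ T := by
      intro r j l hb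
      have := hb.1
      simp only [T, Finset.mem_filter, Finset.mem_product, Finset.mem_range]
      exact ⟨⟨by omega, by omega, by omega⟩, hb⟩
    obtain ⟨r, j, l, hb⟩ := hex
    obtain ⟨t, ht, hmin⟩ := T.exists_min_image (fun t => posKey m Y Z t.1 t.2.1) ⟨_, hT r j l hb⟩
    exact ⟨t, fun _ => ⟨(Finset.mem_filter.1 ht).2, fun r j l hb => hmin _ (hT r j l hb)⟩⟩
  · exact ⟨(0, 0, 0), fun h => absurd h hex⟩

/-- The words lying in some box satisfy the exchange criterion for linear quotients. -/
lemma exists_exchange_key (h : TriangleData m X Y Z) : ∃ key : (Fin 3 → ι) → ℤ ×ₗ ℤ,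
    ∀ K ∈ {v | ∃ r j l, InBox m X Y Z r j l v}, ∀ L ∈ {v | ∃ r j l, InBox m X Y Z r j l v},
      L ≠ K → key L ≤ key K → ∃ i, L i ≠ K i ∧
        Function.update K i (L i) ∈ {v | ∃ r j l, InBox m X Y Z r j l v} ∧
        (key (Function.update K i (L i)) < key K ∨ Function.update K i (L i) = L) := by
  choose t ht using exists_key m X Y Z
  refine ⟨fun v => posKey m Y Z (t v).1 (t v).2.1, ?_⟩
  intro K hK L hL hne hle
  obtain ⟨hKb, hKmin⟩ := ht K hK
  obtain ⟨hLb, hLmin⟩ := ht L hL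
  simp only at hle
  -- By minimality of its box, `K` carries the exceptional letters `β(a)`, `γ(a)`.
  have hK1 : K 1 ∉ yMinus Y (t K).1 (t K).2.1 (t K).2.2 := fun hmem => by
    obtain ⟨r', j', l', hb, hlt⟩ := h.exists_smaller_box hKb (Or.inl hmem)
    exact absurd hlt (not_lt.2 (hKmin _ _ _ hb))
  have hK2 : K 2 ∉ zMinus Z (t K).1 (t K).2.1 (t K).2.2 := fun hmem => by
    obtain ⟨r', j', l', hb, hlt⟩ := h.exists_smaller_box hKb (Or.inr hmem)
    exact absurd hlt (not_lt.2 (hKmin _ _ _ hb))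
  have hsmall : ∀ M, InBox m X Y Z (t K).1 (t K).2.1 (t K).2.2 M →
      (M 1 ∈ yMinus Y (t K).1 (t K).2.1 (t K).2.2 ∨ M 2 ∈ zMinus Z (t K).1 (t K).2.1 (t K).2.2) →
      posKey m Y Z (t M).1 (t M).2.1 < posKey m Y Z (t K).1 (t K).2.1 := by
    intro M hMb hM
    obtain ⟨r', j', l', hb, hlt⟩ := h.exists_smaller_box hMb hM
    exact lt_of_le_of_lt ((ht M ⟨_, _, _, hMb⟩).2 _ _ _ hb) hlt
  obtain ⟨hs, hx, hy, hz⟩ := hKb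
  have hdich : (L 1 ∈ yMinus Y (t K).1 (t K).2.1 (t K).2.2 ∨
      L 2 ∈ zMinus Z (t K).1 (t K).2.1 (t K).2.2) ∨ (L 1 = K 1 ∧ L 2 = K 2) := by
    by_cases hpos : (t L).1 = (t K).1 ∧ (t L).2.1 = (t K).2.1
    · by_cases hc : L 1 ∈ yMinus Y (t K).1 (t K).2.1 (t K).2.2 ∨
          L 2 ∈ zMinus Z (t K).1 (t K).2.1 (t K).2.2
      · exact Or.inl hc
      · push Not at hc
        obtain ⟨hs', -, hy', hz'⟩ := hLb
        have h3 : (t L).2.2 = (t K).2.2 := by omega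
        rw [hpos.1, hpos.2, h3] at hy' hz'
        exact Or.inr ⟨h.eq_of_notMem_yMinus hs hy' hy hc.1 hK1,
          h.eq_of_notMem_zMinus hs hz' hz hc.2 hK2⟩
    · exact Or.inl (h.mem_minus_of_key_le hs hLb.1 hpos hle hLb.2.2.1 hLb.2.2.2)
  rcases hdich with (hm | hm) | ⟨h1, h2⟩
  · have hb : InBox m X Y Z (t K).1 (t K).2.1 (t K).2.2 (Function.update K 1 (L 1)) :=
      ⟨hs, by simpa using hx, by simpa using h.yMinus_subset hs hm, by simpa using hz⟩
    exact ⟨1, fun he => hK1 (he ▸ hm), ⟨_, _, _, hb⟩,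
      Or.inl (hsmall _ hb (Or.inl (by simpa using hm)))⟩
  · have hb : InBox m X Y Z (t K).1 (t K).2.1 (t K).2.2 (Function.update K 2 (L 2)) :=
      ⟨hs, by simpa using hx, by simpa using hy, by simpa using h.zMinus_subset hs hm⟩
    exact ⟨2, fun he => hK2 (he ▸ hm), ⟨_, _, _, hb⟩,
      Or.inl (hsmall _ hb (Or.inr (by simpa using hm)))⟩
  · have hupd : Function.update K 0 (L 0) = L := by
      funext i
      fin_cases i <;> simp [h1, h2]
    refine ⟨0, fun he => hne ?_, by rw [hupd]; exact hL, Or.inr hupd⟩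
    rw [← hupd, he, Function.update_eq_self]

end TriangleData

/-! ### The triangle attached to a polarization -/

/-- A down-graph with full support is connected on three vertices, so at most one of its three edges
fails to be a linear syzygy edge. -/
lemma downGraph_edges {n : ℕ} (XM : Fin 3 → (Fin 3 → ℕ) → Finset (Fin n))
    (hconn : ∀ c : Fin 3 → ℕ, (∑ t, c t) = n + 1 →
      ∀ i j, 1 ≤ c i → 1 ≤ c j →
        Relation.ReflTransGen (fun r s => 1 ≤ c r ∧ 1 ≤ c s ∧ LSedge XM c r s) i j)
    {r j l : ℕ} (hs : r + j + l + 1 = n - 1) :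
    (XM 0 ![r + 1, j + 1, l] = XM 0 ![r + 1, j, l + 1] ∧
      XM 1 ![r + 1, j + 1, l] = XM 1 ![r, j + 1, l + 1]) ∨
    (XM 0 ![r + 1, j + 1, l] = XM 0 ![r + 1, j, l + 1] ∧
      XM 2 ![r + 1, j, l + 1] = XM 2 ![r, j + 1, l + 1]) ∨
    (XM 1 ![r + 1, j + 1, l] = XM 1 ![r, j + 1, l + 1] ∧
      XM 2 ![r + 1, j, l + 1] = XM 2 ![r, j + 1, l + 1]) := by
  set c : Fin 3 → ℕ := ![r + 1, j + 1, l + 1] with hc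
  have hc1 : ∀ i, 1 ≤ c i := by
    intro i
    fin_cases i <;> simp [hc]
  have h0 : subE c 0 = ![r, j + 1, l + 1] := by
    funext i
    fin_cases i <;> simp [hc, subE]
  have h1 : subE c 1 = ![r + 1, j, l + 1] := by
    funext i
    fin_cases i <;> simp [hc, subE]
  have h2 : subE c 2 = ![r + 1, j + 1, l] := by
    funext i
    fin_cases i <;> simp [hc, subE]
  have hsum : ∑ t, c t = n + 1 := by
    simp [hc, Fin.sum_univ_three]; omega
  have hsymm : ∀ a b, LSedge XM c a b → LSedge XM c b a := fun a b hab p hp hpa hpb =>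
    (hab p hp hpb hpa).symm
  -- A vertex of the down-graph cannot be isolated.
  have hvert : ∀ a b : Fin 3, a ≠ b → ∃ s, s ≠ a ∧ LSedge XM c a s := by
    intro a b hab
    by_contra hcon
    push Not at hcon
    have hstay : ∀ s, Relation.ReflTransGen
        (fun r s => 1 ≤ c r ∧ 1 ≤ c s ∧ LSedge XM c r s) a s → s = a := by
      intro s hr
      induction hr with
      | refl => rfl
      | tail _ hstep ih =>
        subst ih
        by_contra hne
        exact hcon _ hne hstep.2.2
    exact hab (hstay b (hconn c hsum a b (hc1 a) (hc1 b))).symm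
  have e01 : LSedge XM c 0 1 → XM 2 ![r + 1, j, l + 1] = XM 2 ![r, j + 1, l + 1] := by
    intro he
    have := he 2 (hc1 2) (by decide) (by decide)
    rw [h0, h1] at this
    exact this.symm
  have e02 : LSedge XM c 0 2 → XM 1 ![r + 1, j + 1, l] = XM 1 ![r, j + 1, l + 1] := by
    intro he
    have := he 1 (hc1 1) (by decide) (by decide)
    rw [h0, h2] at this
    exact this.symm
  have e12 : LSedge XM c 1 2 → XM 0 ![r + 1, j + 1, l] = XM 0 ![r + 1, j, l + 1] := by
    intro he
    have := he 0 (hc1 0) (by decide) (by decide)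
    rw [h1, h2] at this
    exact this.symm
  have e10 := hsymm 1 0
  have e20 := hsymm 2 0
  have e21 := hsymm 2 1
  have d0 : LSedge XM c 0 1 ∨ LSedge XM c 0 2 := by
    obtain ⟨s, hs, hl⟩ := hvert 0 1 (by decide)
    fin_cases s
    · exact absurd rfl hs
    · exact Or.inl hl
    · exact Or.inr hl
  have d1 : LSedge XM c 0 1 ∨ LSedge XM c 1 2 := by
    obtain ⟨s, hs, hl⟩ := hvert 1 0 (by decide)
    fin_cases s
    · exact Or.inl (e10 hl)
    · exact absurd rfl hs
    · exact Or.inr hl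
  have d2 : LSedge XM c 0 2 ∨ LSedge XM c 1 2 := by
    obtain ⟨s, hs, hl⟩ := hvert 2 0 (by decide)
    fin_cases s
    · exact Or.inl (e20 hl)
    · exact Or.inr (e21 hl)
    · exact absurd rfl hs
  rcases d0 with h01 | h02
  · rcases d2 with h02 | h12
    · exact Or.inr (Or.inr ⟨e02 h02, e01 h01⟩)
    · exact Or.inr (Or.inl ⟨e12 h12, e01 h01⟩)
  · rcases d1 with h01 | h12
    · exact Or.inr (Or.inr ⟨e02 h02, e01 h01⟩)
    · exact Or.inl ⟨e12 h12, e02 h02⟩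

/-- The maps `X, Y, Z` of a polarization, shifted to `Δ_3(n - 1)`. -/
lemma triangleData_of_polarization {n : ℕ} (hn : 1 ≤ n)
    (XM : Fin 3 → (Fin 3 → ℕ) → Finset (Fin n))
    (hrank : ∀ i b, (∑ t, b t) = n → (XM i b).card = b i)
    (hiso : ∀ (i : Fin 3) (a b : Fin 3 → ℕ), (∑ t, a t) = n → (∑ t, b t) = n →
      a i ≤ b i → (∀ j, j ≠ i → b j ≤ a j) → XM i a ⊆ XM i b)
    (hconn : ∀ c : Fin 3 → ℕ, (∑ t, c t) = n + 1 →
      ∀ i j, 1 ≤ c i → 1 ≤ c j →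
        Relation.ReflTransGen (fun r s => 1 ≤ c r ∧ 1 ≤ c s ∧ LSedge XM c r s) i j) :
    TriangleData (n - 1) (fun r j l => XM 0 ![r + 1, j, l]) (fun r j l => XM 1 ![r, j + 1, l])
      (fun r j l => XM 2 ![r, j, l + 1]) where
  cardY := fun {r j l} hs => by
    rw [hrank _ _ (by simp [Fin.sum_univ_three]; omega)]
    simp
  cardZ := fun {r j l} hs => by
    rw [hrank _ _ (by simp [Fin.sum_univ_three]; omega)]
    simp
  monoX := by
    intro r j l r' j' l' hs hs' h1 h2 h3
    apply hiso
    · simp [Fin.sum_univ_three]; omega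
    · simp [Fin.sum_univ_three]; omega
    · simpa using h1
    · intro i hi
      fin_cases i <;> simp_all
  monoY := by
    intro r j l r' j' l' hs hs' h1 h2 h3
    apply hiso
    · simp [Fin.sum_univ_three]; omega
    · simp [Fin.sum_univ_three]; omega
    · simpa using h2
    · intro i hi
      fin_cases i <;> simp_all
  monoZ := by
    intro r j l r' j' l' hs hs' h1 h2 h3
    apply hiso
    · simp [Fin.sum_univ_three]; omega
    · simp [Fin.sum_univ_three]; omega
    · simpa using h3
    · intro i hi
      fin_cases i <;> simp_all
  tri := fun hs => downGraph_edges XM hconn hs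

/-- Let `X = XM 0`, `Y = XM 1`, `Z = XM 2` be rank-preserving isotone maps
`Δ_3(n) → B(n)` defining a polarization of `(x_1,x_2,x_3)^n`, equivalently (by the main
classification) satisfying the spanning-tree condition on linear syzygy edges in every
down-graph.  Let `I` be the ideal generated by all rainbow monomials `x_α y_β z_γ` such that
for some `a ∈ Δ_3(n-1)` one has `α ∈ X(a+e_1)`, `β ∈ Y(a+e_2)`, `γ ∈ Z(a+e_3)`.  Then `I` has
linear quotients: its generators can be totally ordered `u_0, u_1, …` so that for each
generator `u_K` the colon ideal `(u_0, …, u_{K-1}) : u_K` is generated by variables. -/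
theorem stmt_19 {k : Type*} [Field k] {n : ℕ} (hn : 1 ≤ n)
    (XM : Fin 3 → (Fin 3 → ℕ) → Finset (Fin n))
    (hrank : ∀ i b, (∑ t, b t) = n → (XM i b).card = b i)
    (hiso : ∀ (i : Fin 3) (a b : Fin 3 → ℕ), (∑ t, a t) = n → (∑ t, b t) = n →
      a i ≤ b i → (∀ j, j ≠ i → b j ≤ a j) → XM i a ⊆ XM i b)
    (hconn : ∀ c : Fin 3 → ℕ, (∑ t, c t) = n + 1 →
      ∀ i j, 1 ≤ c i → 1 ≤ c j →
        Relation.ReflTransGen (fun r s => 1 ≤ c r ∧ 1 ≤ c s ∧ LSedge XM c r s) i j) :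
    ∃ (N : ℕ) (u : Fin N → MvPolynomial (Fin 3 × Fin n) k),
      Function.Injective u ∧
      Set.range u = { p | ∃ a : Fin 3 → ℕ, (∑ t, a t) = n - 1 ∧
        ∃ jv : Fin 3 → Fin n, (∀ i, jv i ∈ XM i (addE a i)) ∧
          p = ∏ i : Fin 3, (MvPolynomial.X (i, jv i) : MvPolynomial (Fin 3 × Fin n) k) } ∧
      ∀ K : Fin N, ∃ S : Set (Fin 3 × Fin n), ∀ g,
        g * u K ∈ Ideal.span { q | ∃ L, L < K ∧ q = u L } ↔
          g ∈ Ideal.span (MvPolynomial.X '' S) := by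
  have htri := triangleData_of_polarization hn XM hrank hiso hconn
  obtain ⟨key, hkey⟩ := htri.exists_exchange_key
  obtain ⟨N, u, hinj, hrange, hcolon⟩ := linearQuotients_of_key (k := k) _ key hkey
  refine ⟨N, u, hinj, ?_, hcolon⟩
  rw [hrange]
  have hadd : ∀ r j l : ℕ, addE ![r, j, l] 0 = ![r + 1, j, l] ∧
      addE ![r, j, l] 1 = ![r, j + 1, l] ∧ addE ![r, j, l] 2 = ![r, j, l + 1] := by
    intro r j l
    refine ⟨?_, ?_, ?_⟩ <;> funext i <;> fin_cases i <;> simp [addE]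
  ext p
  constructor
  · rintro ⟨v, ⟨r, j, l, hs, hx, hy, hz⟩, rfl⟩
    refine ⟨![r, j, l], by simpa [Fin.sum_univ_three] using hs, v, ?_, rfl⟩
    intro i
    obtain ⟨h0, h1, h2⟩ := hadd r j l
    fin_cases i
    · simpa [h0] using hx
    · simpa [h1] using hy
    · simpa [h2] using hz
  · rintro ⟨a, hs, v, hv, rfl⟩
    obtain ⟨h0, h1, h2⟩ := hadd (a 0) (a 1) (a 2)
    have ha : ![a 0, a 1, a 2] = a := by
      funext i
      fin_cases i <;> rfl
    rw [ha] at h0 h1 h2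
    refine ⟨v, ⟨a 0, a 1, a 2, by simpa [Fin.sum_univ_three] using hs, ?_, ?_, ?_⟩, rfl⟩
    · simpa [h0] using hv 0
    · simpa [h1] using hv 1
    · simpa [h2] using hv 2
end
end
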